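/- Define J(R) := e^{M} ∫_{-R}^{R} φ_m(ρ) ( ∫_{ℝ^N} e^{-xᵀKx} e^{iρ · P̃(x)^{1/(2m)}} dx ) dρ for R > 0. Then J(R) tends, as R → ∞, to the original integral: lim_{R→∞} J(R) = ∫_{ℝ^N} e^{-xᵀKx − P(x)} dx. -/

import Mathlib

open MeasureTheory Matrix

/-- The Fourier transform `φ_m(ρ) := (1/(2π)) ∫_ℝ e^{-iρr} e^{-r^{2m}} dr`. -/
noncomputable def phiFT (m : ℕ) (ρ : ℝ) : ℂ :=
  (1 / (2 * Real.pi)) *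
    ∫ r : ℝ, Complex.exp (-(Complex.I * (ρ : ℂ) * (r : ℂ))) * (Real.exp (-(r ^ (2 * m))) : ℂ)

/-!
Fourier inversion writes `g r = exp (-r ^ (2 * m))` as the superposition `∫ φ_m(ρ) exp (i ρ r) dρ`
of oscillating exponentials. At `r = (P x + M) ^ (1 / (2 * m))` this expresses `exp (-(P x + M))`
through the phases `exp (i ρ r)`, and since `φ_m` and the Gaussian weight are both integrable,
Fubini's theorem moves the integral over `ρ` outside.

Integrability of `φ_m` comes from the smoothness of `g`: the second derivative of `g` is integrable,
so its Fourier transform decays like `ρ⁻²`.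
-/

section FourierDecay

open Complex FourierTransform

variable {E : Type*} [NormedAddCommGroup E] [NormedSpace ℂ E]

lemma norm_fourier_le_integral_norm (f : ℝ → E) (x : ℝ) : ‖𝓕 f x‖ ≤ ∫ v, ‖f v‖ :=
  VectorFourier.norm_fourierIntegral_le_integral_norm _ _ _ _ _

lemma continuous_fourier_of_integrable {f : ℝ → E} (hf : Integrable f) : Continuous (𝓕 f) :=
  VectorFourier.fourierIntegral_continuous Real.continuous_fourierChar
    (innerSL ℝ).continuous₂ hf

lemma sq_mul_norm_fourier_le_integral_norm_iteratedDeriv_two {f : ℝ → E} (hf : ContDiff ℝ 2 f)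
    (hint : ∀ k : ℕ, k ≤ 2 → Integrable (iteratedDeriv k f)) (x : ℝ) :
    x ^ 2 * ‖𝓕 f x‖ ≤ ∫ v, ‖iteratedDeriv 2 f v‖ := by
  have hfourier : 𝓕 (iteratedDeriv 2 f) x = (2 * Real.pi * I * x) ^ 2 • 𝓕 f x :=
    congrFun (Real.fourier_iteratedDeriv (N := 2) hf
      (fun k hk => hint k (by exact_mod_cast hk)) le_rfl) x
  have hnorm : ‖𝓕 (iteratedDeriv 2 f) x‖ = (2 * Real.pi) ^ 2 * (x ^ 2 * ‖𝓕 f x‖) := by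
    rw [hfourier, norm_smul]
    simp [mul_pow, mul_assoc]
  calc x ^ 2 * ‖𝓕 f x‖ ≤ (2 * Real.pi) ^ 2 * (x ^ 2 * ‖𝓕 f x‖) :=
        le_mul_of_one_le_left (by positivity) (by nlinarith [Real.pi_gt_three])
    _ = ‖𝓕 (iteratedDeriv 2 f) x‖ := hnorm.symm
    _ ≤ ∫ v, ‖iteratedDeriv 2 f v‖ := norm_fourier_le_integral_norm _ x

lemma integrable_fourier_of_integrable_iteratedDeriv {f : ℝ → E} (hf : ContDiff ℝ 2 f)
    (hint : ∀ k : ℕ, k ≤ 2 → Integrable (iteratedDeriv k f)) : Integrable (𝓕 f) := by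
  have hf0 : Integrable f := by simpa only [iteratedDeriv_zero] using hint 0 zero_le_two
  refine (integrable_inv_one_add_sq.const_mul
    ((∫ v, ‖f v‖) + ∫ v, ‖iteratedDeriv 2 f v‖)).mono'
    (continuous_fourier_of_integrable hf0).aestronglyMeasurable (.of_forall fun x => ?_)
  rw [← div_eq_mul_inv, le_div_iff₀ (by positivity)]
  calc ‖𝓕 f x‖ * (1 + x ^ 2) = ‖𝓕 f x‖ + x ^ 2 * ‖𝓕 f x‖ := by ring
    _ ≤ (∫ v, ‖f v‖) + ∫ v, ‖iteratedDeriv 2 f v‖ :=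
      add_le_add (norm_fourier_le_integral_norm f x)
        (sq_mul_norm_fourier_le_integral_norm_iteratedDeriv_two hf hint x)

end FourierDecay

section AngularFourier

open Complex FourierTransform

/-- The Fourier transform in the angular-frequency convention,
`ρ ↦ (1/(2π)) ∫ e^{-iρr} f(r) dr`. Mathlib's `𝓕` uses the phase `e^{-2πiρr}` and no prefactor. -/
noncomputable def angularFourier (f : ℝ → ℂ) (ρ : ℝ) : ℂ :=
  (1 / (2 * Real.pi)) * ∫ r : ℝ, cexp (-(I * (ρ : ℂ) * (r : ℂ))) * f r

lemma angularFourier_eq_fourier (f : ℝ → ℂ) (ρ : ℝ) :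
    angularFourier f ρ = (1 / (2 * Real.pi)) * 𝓕 f (ρ / (2 * Real.pi)) := by
  rw [angularFourier, Real.fourier_real_eq_integral_exp_smul]
  congr! 4 with r
  push_cast
  field_simp

lemma integrable_angularFourier {f : ℝ → ℂ} (hf : Integrable (𝓕 f)) :
    Integrable (angularFourier f) := by
  rw [funext (angularFourier_eq_fourier f)]
  exact (hf.comp_div Real.two_pi_pos.ne').const_mul _

lemma integral_angularFourier_mul_cexp {f : ℝ → ℂ} (hcont : Continuous f) (hf : Integrable f)
    (hfourier : Integrable (𝓕 f)) (s : ℝ) :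
    ∫ ρ : ℝ, angularFourier f ρ * cexp (I * (ρ : ℂ) * (s : ℂ)) = f s := by
  let F : ℝ → ℂ := fun v => cexp ((2 * Real.pi * inner ℝ v s : ℝ) * I) • 𝓕 f v
  have hF (ρ : ℝ) : angularFourier f ρ * cexp (I * (ρ : ℂ) * (s : ℂ)) =
      ((2 * Real.pi : ℝ) : ℂ)⁻¹ * F (ρ / (2 * Real.pi)) := by
    have hphase : I * (ρ : ℂ) * (s : ℂ) =
        ((2 * Real.pi * inner ℝ (ρ / (2 * Real.pi)) s : ℝ) : ℂ) * I := by
      simp only [RCLike.inner_apply, conj_trivial]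
      push_cast
      field_simp
    simp only [F, angularFourier_eq_fourier, hphase, smul_eq_mul]
    push_cast
    ring
  calc ∫ ρ : ℝ, angularFourier f ρ * cexp (I * (ρ : ℂ) * (s : ℂ))
      = ((2 * Real.pi : ℝ) : ℂ)⁻¹ * ∫ ρ : ℝ, F (ρ / (2 * Real.pi)) := by
        simp_rw [hF, integral_const_mul]
    _ = ∫ v, F v := by
        rw [Measure.integral_comp_div, abs_of_pos Real.two_pi_pos, real_smul,
          inv_mul_cancel_left₀ (ofReal_ne_zero.mpr Real.two_pi_pos.ne')]
    _ = 𝓕⁻ (𝓕 f) s := (Real.fourierInv_eq' _ s).symm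
    _ = f s := congrFun (hcont.fourierInv_fourier_eq hf hfourier) s

end AngularFourier

section ExpNegPow

open Complex FourierTransform Polynomial

/-- The function `r ↦ e^{-r^n}` on the real line, valued in `ℂ` so that it has a Fourier transform;
`φ_m` is the transform of its case `n = 2m`. -/
noncomputable def expNegPow (n : ℕ) (r : ℝ) : ℂ := (Real.exp (-(r ^ n)) : ℂ)

lemma phiFT_eq_angularFourier (m : ℕ) : phiFT m = angularFourier (expNegPow (2 * m)) := rfl

lemma contDiff_expNegPow (n : ℕ) {k : WithTop ℕ∞} : ContDiff ℝ k (expNegPow n) :=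
  ofRealCLM.contDiff.comp (contDiff_id.pow n).neg.exp

lemma continuous_expNegPow (n : ℕ) : Continuous (expNegPow n) :=
  (contDiff_expNegPow n (k := 0)).continuous

lemma hasDerivAt_eval_mul_expNegPow (n : ℕ) (p : ℂ[X]) (r : ℝ) :
    HasDerivAt (fun r : ℝ => p.eval (r : ℂ) * expNegPow n r)
      ((derivative p - C (n : ℂ) * X ^ (n - 1) * p).eval (r : ℂ) * expNegPow n r) r := by
  have hexp : HasDerivAt (expNegPow n)
      ((Real.exp (-(r ^ n)) * -(n * r ^ (n - 1)) : ℝ) : ℂ) r :=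
    (hasDerivAt_pow n r).neg.exp.ofReal_comp
  refine ((p.hasDerivAt (r : ℂ)).comp_ofReal.mul hexp).congr_deriv ?_
  simp only [expNegPow, eval_sub, eval_mul, eval_C, eval_pow, eval_X]
  push_cast
  ring

lemma exists_iteratedDeriv_expNegPow_eq (n k : ℕ) :
    ∃ p : ℂ[X], iteratedDeriv k (expNegPow n) = fun r : ℝ => p.eval (r : ℂ) * expNegPow n r := by
  induction k with
  | zero => exact ⟨1, by simp⟩
  | succ k ih =>
    obtain ⟨p, hp⟩ := ih
    refine ⟨derivative p - C (n : ℂ) * X ^ (n - 1) * p, ?_⟩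
    rw [iteratedDeriv_succ, hp]
    exact funext fun r => (hasDerivAt_eval_mul_expNegPow n p r).deriv

variable {n : ℕ}

lemma exp_neg_pow_le_exp_one_mul_exp_neg_sq (hn : Even n) (hn0 : n ≠ 0) (r : ℝ) :
    Real.exp (-(r ^ n)) ≤ Real.exp 1 * Real.exp (-1 * r ^ 2) := by
  obtain ⟨m, rfl⟩ := hn.two_dvd
  rw [← Real.exp_add, Real.exp_le_exp, pow_mul]
  have hpow : 0 ≤ (r ^ 2) ^ m := by positivity
  rcases le_total 1 (r ^ 2) with hr | hr
  · linarith [le_self_pow₀ hr (right_ne_zero_of_mul hn0)]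
  · linarith

lemma integrable_pow_mul_expNegPow (hn : Even n) (hn0 : n ≠ 0) (k : ℕ) :
    Integrable fun r : ℝ => (r : ℂ) ^ k * expNegPow n r := by
  have hgauss : Integrable fun r : ℝ => r ^ k * Real.exp (-1 * r ^ 2) := by
    simpa only [Real.rpow_natCast] using
      integrable_rpow_mul_exp_neg_mul_sq one_pos (neg_one_lt_zero.trans_le k.cast_nonneg)
  refine (hgauss.norm.const_mul (Real.exp 1)).mono'
    ((continuous_ofReal.pow k).mul (continuous_expNegPow n)).aestronglyMeasurable
    (.of_forall fun r => ?_)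
  calc ‖(r : ℂ) ^ k * expNegPow n r‖ = |r ^ k| * Real.exp (-(r ^ n)) := by
        simp [expNegPow, -ofReal_exp]
    _ ≤ |r ^ k| * (Real.exp 1 * Real.exp (-1 * r ^ 2)) := by
        gcongr
        exact exp_neg_pow_le_exp_one_mul_exp_neg_sq hn hn0 r
    _ = Real.exp 1 * ‖r ^ k * Real.exp (-1 * r ^ 2)‖ := by
        rw [norm_mul, Real.norm_eq_abs, Real.norm_eq_abs, Real.abs_exp, mul_left_comm]

lemma integrable_eval_mul_expNegPow (hn : Even n) (hn0 : n ≠ 0) (p : ℂ[X]) :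
    Integrable fun r : ℝ => p.eval (r : ℂ) * expNegPow n r := by
  induction p using Polynomial.induction_on' with
  | add p q hp hq => simpa only [eval_add, add_mul, Pi.add_def] using hp.add hq
  | monomial k c =>
    simpa only [eval_monomial, mul_assoc] using (integrable_pow_mul_expNegPow hn hn0 k).const_mul c

lemma integrable_iteratedDeriv_expNegPow (hn : Even n) (hn0 : n ≠ 0) (k : ℕ) :
    Integrable (iteratedDeriv k (expNegPow n)) := by
  obtain ⟨p, hp⟩ := exists_iteratedDeriv_expNegPow_eq n k
  exact hp ▸ integrable_eval_mul_expNegPow hn hn0 p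

lemma integrable_expNegPow (hn : Even n) (hn0 : n ≠ 0) : Integrable (expNegPow n) := by
  simpa only [iteratedDeriv_zero] using integrable_iteratedDeriv_expNegPow hn hn0 0

lemma integrable_fourier_expNegPow (hn : Even n) (hn0 : n ≠ 0) : Integrable (𝓕 (expNegPow n)) :=
  integrable_fourier_of_integrable_iteratedDeriv (contDiff_expNegPow n)
    fun k _ => integrable_iteratedDeriv_expNegPow hn hn0 k

lemma exp_mul_expNegPow_rpow {m : ℕ} (hm : m ≠ 0) {M y : ℝ} (hy : -M ≤ y) :
    (Real.exp M : ℂ) * expNegPow (2 * m) ((y + M) ^ ((1 : ℝ) / (2 * m))) = (Real.exp (-y) : ℂ) := by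
  have hroot : ((y + M) ^ ((1 : ℝ) / (2 * m))) ^ (2 * m) = y + M := by
    simpa using Real.rpow_inv_natCast_pow (neg_le_iff_add_nonneg.mp hy)
      (mul_ne_zero two_ne_zero hm)
  rw [expNegPow, hroot, ← ofReal_mul, ← Real.exp_add, neg_add_rev, add_neg_cancel_left]

end ExpNegPow

section PhaseIntegral

open Complex Filter FourierTransform Topology

variable {α : Type*} [MeasurableSpace α] {μ : Measure α} {w : α → ℂ} {q : α → ℝ}

lemma norm_cexp_I_mul_ofReal_mul_ofReal (ρ s : ℝ) : ‖cexp (I * (ρ : ℂ) * (s : ℂ))‖ = 1 := by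
  rw [mul_assoc, ← ofReal_mul, norm_exp_I_mul_ofReal]

lemma integrable_prod_mul_mul_cexp {ν : Measure ℝ} [SFinite μ] [SFinite ν] {φ : ℝ → ℂ}
    (hφ : Integrable φ ν) (hw : Integrable w μ) (hq : AEMeasurable q μ) :
    Integrable (fun z : ℝ × α => φ z.1 * (w z.2 * cexp (I * (z.1 : ℂ) * (q z.2 : ℂ))))
      (ν.prod μ) := by
  have hpair : AEMeasurable (fun z : ℝ × α => (z.1, q z.2)) (ν.prod μ) :=
    measurable_fst.aemeasurable.prodMk hq.comp_snd
  have hcexp : Continuous fun z : ℝ × ℝ => cexp (I * (z.1 : ℂ) * (z.2 : ℂ)) := by fun_prop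
  simpa only [mul_assoc, Function.comp_def] using (hφ.mul_prod hw).mul_bdd
    (hcexp.measurable.comp_aemeasurable hpair).aestronglyMeasurable
    (.of_forall fun z => (norm_cexp_I_mul_ofReal_mul_ofReal z.1 (q z.2)).le)

lemma tendsto_intervalIntegral_mul_integral_mul_cexp [SFinite μ] {φ : ℝ → ℂ} (hφ : Integrable φ)
    (hw : Integrable w μ) (hq : AEMeasurable q μ) :
    Tendsto (fun R : ℝ => ∫ ρ in (-R)..R, φ ρ * ∫ x, w x * cexp (I * (ρ : ℂ) * (q x : ℂ)) ∂μ)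
      atTop (𝓝 (∫ x, w x * (∫ ρ : ℝ, φ ρ * cexp (I * (ρ : ℂ) * (q x : ℂ))) ∂μ)) := by
  have hint := integrable_prod_mul_mul_cexp hφ hw hq
  have hswap : ∫ ρ : ℝ, φ ρ * ∫ x, w x * cexp (I * (ρ : ℂ) * (q x : ℂ)) ∂μ =
      ∫ x, w x * (∫ ρ : ℝ, φ ρ * cexp (I * (ρ : ℂ) * (q x : ℂ))) ∂μ := by
    simp_rw [← integral_const_mul]
    rw [integral_integral_swap hint]
    simp_rw [mul_left_comm]
  rw [← hswap]
  refine intervalIntegral_tendsto_integral ?_ tendsto_neg_atTop_atBot tendsto_id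
  simpa only [integral_const_mul] using hint.integral_prod_left

lemma tendsto_intervalIntegral_angularFourier_mul_integral [SFinite μ] {g : ℝ → ℂ}
    (hcont : Continuous g) (hg : Integrable g) (hfourier : Integrable (𝓕 g))
    (hw : Integrable w μ) (hq : AEMeasurable q μ) :
    Tendsto (fun R : ℝ =>
        ∫ ρ in (-R)..R, angularFourier g ρ * ∫ x, w x * cexp (I * (ρ : ℂ) * (q x : ℂ)) ∂μ)
      atTop (𝓝 (∫ x, w x * g (q x) ∂μ)) := by
  simpa only [integral_angularFourier_mul_cexp hcont hg hfourier] using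
    tendsto_intervalIntegral_mul_integral_mul_cexp (integrable_angularFourier hfourier) hw hq

end PhaseIntegral

section Gaussian

variable {ι E : Type*} [Fintype ι] [NormedAddCommGroup E]

lemma integrable_comp_mulVec [DecidableEq ι] {f : (ι → ℝ) → E} (hf : Integrable f)
    {B : Matrix ι ι ℝ} (hB : B.det ≠ 0) : Integrable fun x => f (B *ᵥ x) := by
  have hmap : Integrable f (Measure.map (toLin' B) volume) := by
    rw [Real.map_matrix_volume_pi_eq_smul_volume_pi hB]
    exact hf.smul_measure ENNReal.ofReal_ne_top
  exact hmap.comp_measurable (toLin' B).continuous_of_finiteDimensional.measurable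

open scoped MatrixOrder in
lemma integrable_cexp_neg_dotProduct_mulVec {K : Matrix ι ι ℝ} (hK : K.PosDef) :
    Integrable fun x : ι → ℝ => Complex.exp (-((x ⬝ᵥ K *ᵥ x : ℝ) : ℂ)) := by
  classical
  obtain ⟨B, rfl⟩ := CStarAlgebra.nonneg_iff_eq_star_mul_self.mp hK.posSemidef.nonneg
  have hB : B.det ≠ 0 := right_ne_zero_of_mul (det_mul (star B) B ▸ hK.det_pos.ne')
  have hquad (x : ι → ℝ) : x ⬝ᵥ (star B * B) *ᵥ x = ∑ i, (B *ᵥ x) i ^ 2 := by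
    rw [← mulVec_mulVec, dotProduct_mulVec, star_eq_conjTranspose,
      conjTranspose_eq_transpose_of_trivial, vecMul_transpose]
    simp only [dotProduct, sq]
  have hstd : Integrable fun y : ι → ℝ => Complex.exp (-((∑ i, y i ^ 2 : ℝ) : ℂ)) := by
    simpa using GaussianFourier.integrable_cexp_neg_mul_sum_add (ι := ι) (b := 1) (by simp) 0
  simpa only [hquad] using integrable_comp_mulVec hstd hB

end Gaussian

theorem stmt9_general {α : Type*} [MeasurableSpace α] {μ : Measure α} [SFinite μ]
    {m : ℕ} (hm : 0 < m) {w : α → ℂ} (hw : Integrable w μ)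
    {P : α → ℝ} (hP : AEMeasurable P μ) {M : ℝ} (hPbound : ∀ᵐ x ∂μ, -M ≤ P x)
    {J : ℝ → ℂ}
    (hJ : ∀ R > 0, J R = (Real.exp M : ℂ) *
      ∫ ρ in (-R)..R, phiFT m ρ *
        ∫ x, w x * Complex.exp (Complex.I * (ρ : ℂ) *
          (((P x + M) ^ ((1 : ℝ) / (2 * m)) : ℝ) : ℂ)) ∂μ) :
    Filter.Tendsto J Filter.atTop (nhds (∫ x, w x * (Real.exp (-P x) : ℂ) ∂μ)) := by
  have heven : Even (2 * m) := even_two_mul m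
  have hne : 2 * m ≠ 0 := mul_ne_zero two_ne_zero hm.ne'
  have hlim := (tendsto_intervalIntegral_angularFourier_mul_integral
    (continuous_expNegPow (2 * m)) (integrable_expNegPow heven hne)
    (integrable_fourier_expNegPow heven hne) hw
    ((hP.add_const M).pow_const ((1 : ℝ) / (2 * m)))).const_mul (Real.exp M : ℂ)
  have hvalue : (Real.exp M : ℂ) *
      ∫ x, w x * expNegPow (2 * m) ((P x + M) ^ ((1 : ℝ) / (2 * m))) ∂μ =
        ∫ x, w x * (Real.exp (-P x) : ℂ) ∂μ := by
    rw [← integral_const_mul]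
    refine integral_congr_ae ?_
    filter_upwards [hPbound] with x hx
    rw [mul_left_comm, exp_mul_expNegPow_rpow hm.ne' hx]
  rw [phiFT_eq_angularFourier] at hJ
  rw [← hvalue]
  refine hlim.congr' ?_
  filter_upwards [Filter.eventually_gt_atTop 0] with R hR
  exact (hJ R hR).symm

theorem stmt9 (N m : ℕ) (hN : 0 < N) (hm : 0 < m)
    (p : MvPolynomial (Fin N) ℝ) (hdeg : p.totalDegree = 2 * m)
    (M : ℝ) (hM : 0 ≤ M) (hPbound : ∀ x : Fin N → ℝ, -M ≤ MvPolynomial.eval x p)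
    (K : Matrix (Fin N) (Fin N) ℝ) (hK : K.PosDef)
    (J : ℝ → ℂ)
    (hJ : ∀ R > 0, J R = (Real.exp M : ℂ) *
      ∫ ρ in (-R)..R, phiFT m ρ *
        ∫ x : Fin N → ℝ, Complex.exp (-((x ⬝ᵥ K *ᵥ x : ℝ) : ℂ)) *
          Complex.exp (Complex.I * (ρ : ℂ) *
            (((MvPolynomial.eval x p + M) ^ ((1 : ℝ) / (2 * m)) : ℝ) : ℂ))) :
    Filter.Tendsto J Filter.atTop
      (nhds ((∫ x : Fin N → ℝ,
        Real.exp (-(x ⬝ᵥ K *ᵥ x) - MvPolynomial.eval x p) : ℝ) : ℂ)) := by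
  simpa [sub_eq_add_neg, Complex.exp_add, ← integral_complex_ofReal] using
    stmt9_general hm (integrable_cexp_neg_dotProduct_mulVec hK)
      (MvPolynomial.continuous_eval p).aemeasurable (.of_forall hPbound) hJ
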